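/- Let n be an odd positive integer. There exists θ_c > 0 such that for every θ with 0 < θ < θ_c, the nodal set N(Φ^θ_n) is nonempty and connected, the gradient of Φ^θ_n vanishes nowhere on N(Φ^θ_n) (so the nodal set is a regular simple curve), and ℝ² \ N(Φ^θ_n) has exactly two connected components, i.e. Φ^θ_n has exactly two nodal domains. -/

import Mathlib

/-- The physicist's Hermite polynomials: `H 0 = 1`, `H 1 = 2X`,
`H (n+2) = 2X · H (n+1) - 2(n+1) · H n`. -/
noncomputable def H : ℕ → Polynomial ℝ
  | 0 => 1
  | 1 => Polynomial.C 2 * Polynomial.X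
  | n + 2 => Polynomial.C 2 * Polynomial.X * H (n + 1) - Polynomial.C (2 * (n + 1) : ℝ) * H n

/-- The eigenfunction `Φ^θ_n(x,y) = (cos θ · H_n(x) + sin θ · H_n(y)) e^{-(x²+y²)/2}`. -/
noncomputable def Phi (n : ℕ) (θ : ℝ) : ℝ × ℝ → ℝ := fun p =>
  (Real.cos θ * (H n).eval p.1 + Real.sin θ * (H n).eval p.2) *
    Real.exp (-(p.1 ^ 2 + p.2 ^ 2) / 2)

/-- The nodal set of `Φ^θ_n`. -/
noncomputable def nodalSet (n : ℕ) (θ : ℝ) : Set (ℝ × ℝ) := {p | Phi n θ p = 0}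

/-- The number of nodal domains: the number of connected components of the
complement of the nodal set. -/
noncomputable def numNodalDomains (n : ℕ) (θ : ℝ) : ℕ :=
  {C : Set (ℝ × ℝ) | ∃ p, Phi n θ p ≠ 0 ∧
    C = connectedComponentIn {q : ℝ × ℝ | Phi n θ q ≠ 0} p}.ncard

lemma aux_int {a b : ℝ} : (a : AddCircle (1 : ℝ)) = (b : AddCircle (1 : ℝ)) ↔
    ∃ z : ℤ, a - b = z := by
  rw [← sub_eq_zero, ← AddCircle.coe_sub, AddCircle.coe_eq_zero_iff]
  simp [eq_comm]

lemma aux_const {α : Type*} [TopologicalSpace α] {s : Set α} (hs : IsPreconnected s) {D : α → ℝ}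
    (hD : ContinuousOn D s) (hint : ∀ p ∈ s, ∃ z : ℤ, D p = z) {a b : α} (ha : a ∈ s)
    (hb : b ∈ s) : D a = D b := by
  have key : ∀ a ∈ s, ∀ b ∈ s, ¬ D a < D b := by
    intro a ha b hb hlt
    obtain ⟨i, hi⟩ := hint a ha
    obtain ⟨j, hj⟩ := hint b hb
    have hij : i < j := by rw [hi, hj] at hlt; exact_mod_cast hlt
    have hij' : (i : ℝ) + 1 ≤ j := by exact_mod_cast hij
    obtain ⟨c, hc, hce⟩ := hs.intermediate_value ha hb hD
      (show (i : ℝ) + 1 / 2 ∈ Set.Icc (D a) (D b) from ⟨by linarith, by linarith⟩)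
    obtain ⟨l, hl⟩ := hint c hc
    have h2 : (2 * l : ℝ) = 2 * i + 1 := by linarith
    have h3 : 2 * l = 2 * i + 1 := by exact_mod_cast h2
    omega
  exact le_antisymm (not_lt.1 (key b hb a ha)) (not_lt.1 (key a ha b hb))

lemma aux_unicoh {f : ℝ × ℝ → ℝ} (hf : Continuous f) (hP : IsPreconnected {p | 0 ≤ f p})
    (hQ : IsPreconnected {p | f p ≤ 0}) : IsPreconnected {p | f p = 0} := by
  rw [isPreconnected_iff_subset_of_fully_disjoint_closed (isClosed_eq hf continuous_const)]
  intro u v hu hv huv hd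
  by_contra hcon
  push Not at hcon
  obtain ⟨h1, h2⟩ := hcon
  obtain ⟨a, haN, hau⟩ := Set.not_subset.1 h1
  obtain ⟨b, hbN, hbv⟩ := Set.not_subset.1 h2
  have hav : a ∈ v := (huv haN).resolve_left hau
  have hbu : b ∈ u := (huv hbN).resolve_right hbv
  obtain ⟨g, g0, g1, -⟩ := exists_continuous_zero_one_of_isClosed hu hv hd
  let w : ℝ × ℝ → AddCircle (1 : ℝ) := fun p =>
    if 0 ≤ f p then ((g p / 2 : ℝ) : AddCircle (1 : ℝ)) else ((-(g p / 2) : ℝ) : AddCircle (1 : ℝ))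
  have hw : Continuous w := by
    refine Continuous.if_le ?_ ?_ continuous_const hf ?_
    · exact (AddCircle.continuous_mk' 1).comp (by fun_prop)
    · exact (AddCircle.continuous_mk' 1).comp (by fun_prop)
    · intro x hx
      rcases huv (show x ∈ {p | f p = 0} from hx.symm) with h | h
      · simp [g0 h]
      · rw [g1 h]
        exact aux_int.2 ⟨1, by simp; norm_num⟩
  obtain ⟨e0, he0⟩ : ∃ e : ℝ, (e : AddCircle (1 : ℝ)) = w a := QuotientAddGroup.mk_surjective _
  obtain ⟨L, ⟨-, hL⟩, -⟩ := (AddCircle.isCoveringMap_coe (1 : ℝ)).existsUnique_continuousMap_lifts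
    ⟨w, hw⟩ a e0 he0
  have hL' : ∀ p, ((L p : ℝ) : AddCircle (1 : ℝ)) = w p := fun p => congrFun hL p
  have c1 := aux_const hP (D := fun p => L p - g p / 2) (by fun_prop) (by
    intro p hp
    have h := hL' p
    simp only [w, if_pos (show 0 ≤ f p from hp)] at h
    exact aux_int.1 h) (show a ∈ _ from haN.ge) (show b ∈ _ from hbN.ge)
  have c2 := aux_const hQ (D := fun p => L p + g p / 2) (by fun_prop) (by
    intro p hp
    have h := hL' p
    by_cases h0 : 0 ≤ f p
    · simp only [w, if_pos h0] at h
      obtain ⟨z, hz⟩ := aux_int.1 h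
      rcases huv (show p ∈ {p | f p = 0} from le_antisymm hp h0) with h | h
      · have := g0 h
        simp at this
        exact ⟨z, by linarith⟩
      · have := g1 h
        simp at this
        exact ⟨z + 1, by push_cast; linarith⟩
    · simp only [w, if_neg h0] at h
      obtain ⟨z, hz⟩ := aux_int.1 h
      exact ⟨z, by linarith⟩) (show a ∈ _ from haN.le) (show b ∈ _ from hbN.le)
  have := g1 hav
  have := g0 hbu
  simp at *
  linarith

lemma aux_vert {S : Set (ℝ × ℝ)} {x y y' : ℝ} (h : ∀ t ∈ Set.uIcc y y', (x, t) ∈ S) :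
    JoinedIn S (x, y) (x, y') := by
  have : IsPathConnected ((fun t => (x, t)) '' Set.uIcc y y') := by
    refine IsPathConnected.image ?_ (by fun_prop)
    exact (convex_uIcc y y').isPathConnected ⟨y, Set.left_mem_uIcc⟩
  refine (this.joinedIn _ ⟨y, Set.left_mem_uIcc, rfl⟩ _ ⟨y', Set.right_mem_uIcc, rfl⟩).mono ?_
  rintro _ ⟨t, ht, rfl⟩
  exact h t ht

lemma aux_horiz {S : Set (ℝ × ℝ)} {x x' y : ℝ} (h : ∀ t ∈ Set.uIcc x x', (t, y) ∈ S) :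
    JoinedIn S (x, y) (x', y) := by
  have : IsPathConnected ((fun t => (t, y)) '' Set.uIcc x x') := by
    refine IsPathConnected.image ?_ (by fun_prop)
    exact (convex_uIcc x x').isPathConnected ⟨x, Set.left_mem_uIcc⟩
  refine (this.joinedIn _ ⟨x, Set.left_mem_uIcc, rfl⟩ _ ⟨x', Set.right_mem_uIcc, rfl⟩).mono ?_
  rintro _ ⟨t, ht, rfl⟩
  exact h t ht

lemma aux_pos {f : ℝ → ℝ} (hf : Continuous f) {Y k m : ℝ} (hk : 0 < k) (hY0 : 0 < Y)
    (hY : ∀ y, Y ≤ y → 0 < f y) (hmt : MonotoneOn f (Set.Ici Y))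
    (hmb : MonotoneOn f (Set.Iic (-Y))) (ht : Filter.Tendsto f Filter.atTop Filter.atTop)
    (hM : ∀ y, -Y ≤ y → y ≤ Y → |k * f y| < m)
    (hmono : ∀ x, -m < f x → ∃ x', m ≤ f x' ∧ ∀ t ∈ Set.uIcc x x', f x ≤ f t) :
    IsPathConnected {p : ℝ × ℝ | 0 < f p.1 + k * f p.2} := by
  set S := {p : ℝ × ℝ | 0 < f p.1 + k * f p.2} with hS
  have top : ∀ x y, Y ≤ y → 0 < f x + k * f y → JoinedIn S (x, y) (Y, Y) := by
    intro x y hy hF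
    obtain ⟨c, -, hc⟩ := isCompact_uIcc.exists_isMinOn (s := Set.uIcc x (max x Y))
      ⟨x, Set.left_mem_uIcc⟩ hf.continuousOn
    obtain ⟨y', hy'1, hy'2⟩ := ((ht.eventually_gt_atTop (-f c / k)).and
      (Filter.eventually_ge_atTop y)).exists
    have hXY : Y ≤ max x Y := le_max_right _ _
    have s1 : JoinedIn S (x, y) (x, y') := by
      refine aux_vert fun t ht => ?_
      rw [Set.uIcc_of_le hy'2] at ht
      have := hmt (show y ∈ Set.Ici Y from hy) (show t ∈ Set.Ici Y from hy.trans ht.1) ht.1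
      have := mul_le_mul_of_nonneg_left this hk.le
      simp only [hS, Set.mem_ofPred_eq]; linarith
    have s2 : JoinedIn S (x, y') (max x Y, y') := by
      refine aux_horiz fun t ht => ?_
      have h1 : f c ≤ f t := hc ht
      rw [div_lt_iff₀ hk] at hy'1
      simp only [hS, Set.mem_ofPred_eq]; linarith
    have s3 : JoinedIn S (max x Y, y') (max x Y, Y) := by
      refine aux_vert fun t ht => ?_
      rw [Set.uIcc_of_ge (hy.trans hy'2)] at ht
      have h1 := hY _ hXY
      have h2 := hY _ ht.1
      simp only [hS, Set.mem_ofPred_eq]; positivity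
    have s4 : JoinedIn S (max x Y, Y) (Y, Y) := by
      refine aux_horiz fun t ht => ?_
      rw [Set.uIcc_of_ge hXY] at ht
      have h1 := hY _ ht.1
      have h2 := hY _ le_rfl
      simp only [hS, Set.mem_ofPred_eq]; positivity
    exact ((s1.trans s2).trans s3).trans s4
  have mid : ∀ x y, -Y ≤ y → y ≤ Y → 0 < f x + k * f y → JoinedIn S (x, y) (Y, Y) := by
    intro x y hy1 hy2 hF
    have h1 := abs_lt.1 (hM y hy1 hy2)
    obtain ⟨x', hx', hx''⟩ := hmono x (by linarith)
    have s1 : JoinedIn S (x, y) (x', y) := by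
      refine aux_horiz fun t ht => ?_
      have := hx'' t ht
      simp only [hS, Set.mem_ofPred_eq]; linarith
    have h2 : ∀ t, -Y ≤ t → t ≤ Y → 0 < f x' + k * f t := by
      intro t ht1 ht2
      have := abs_lt.1 (hM t ht1 ht2)
      linarith
    have s2 : JoinedIn S (x', y) (x', Y) := by
      refine aux_vert fun t ht => ?_
      rw [Set.uIcc_of_le hy2] at ht
      exact h2 t (hy1.trans ht.1) ht.2
    exact (s1.trans s2).trans (top x' Y le_rfl (h2 Y (by linarith) le_rfl))
  refine ⟨(Y, Y), ?_, ?_⟩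
  · have h2 := hY _ le_rfl
    simp only [hS, Set.mem_ofPred_eq]; positivity
  · rintro ⟨x, y⟩ hF
    replace hF : 0 < f x + k * f y := hF
    apply JoinedIn.symm
    rcases le_total Y y with h | h
    · exact top x y h hF
    rcases le_total (-Y) y with h' | h'
    · exact mid x y h' h hF
    have hall : ∀ t ∈ Set.uIcc y (-Y), 0 < f x + k * f t := by
      intro t ht
      rw [Set.uIcc_of_le h'] at ht
      have := hmb (show y ∈ Set.Iic (-Y) from h') (show t ∈ Set.Iic (-Y) from ht.2) ht.1
      have := mul_le_mul_of_nonneg_left this hk.le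
      linarith
    exact (aux_vert hall).trans (mid x (-Y) le_rfl (by linarith) (hall _ Set.right_mem_uIcc))

lemma aux_mono1 {f f' : ℝ → ℝ} (hf : ∀ x, HasDerivAt f (f' x) x) (hf' : Continuous f') {m : ℝ}
    (hm : ∀ z, f' z = 0 → m < |f z|) {x : ℝ} (hx : -m < f x) (hpos : 0 < f' x) :
    MonotoneOn f (Set.Ici x) ∨ ∃ z, x ≤ z ∧ MonotoneOn f (Set.Icc x z) ∧ m < f z := by
  have hfc : Continuous f := continuous_iff_continuousAt.2 fun x => (hf x).continuousAt
  have hfd : Differentiable ℝ f := fun x => (hf x).differentiableAt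
  have ivt : ∀ z, x ≤ z → (∀ t, x ≤ t → t ≤ z → f' t ≠ 0) → 0 < f' z := by
    intro z hz h
    by_contra hn
    push Not at hn
    obtain ⟨t, ht, ht0⟩ := intermediate_value_Icc' hz hf'.continuousOn ⟨hn, hpos.le⟩
    exact h t ht.1 ht.2 ht0
  by_cases hex : ∃ z, x ≤ z ∧ f' z = 0
  · right
    set Z := {z | x ≤ z ∧ f' z = 0} with hZ
    have hcl : IsClosed Z := (isClosed_le continuous_const continuous_id).inter
      (isClosed_eq hf' continuous_const)
    have hbd : BddBelow Z := ⟨x, fun z hz => hz.1⟩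
    have hmem : sInf Z ∈ Z := hcl.csInf_mem hex hbd
    have hmon : MonotoneOn f (Set.Icc x (sInf Z)) := by
      refine monotoneOn_of_deriv_nonneg (convex_Icc _ _) hfc.continuousOn hfd.differentiableOn ?_
      intro t ht
      rw [interior_Icc] at ht
      rw [(hf t).deriv]
      refine (ivt t ht.1.le fun s hs1 hs2 hs0 => ?_).le
      have := csInf_le hbd (show s ∈ Z from ⟨hs1, hs0⟩)
      linarith [ht.2]
    refine ⟨sInf Z, hmem.1, hmon, ?_⟩
    have h1 := hmon (Set.left_mem_Icc.2 hmem.1) (Set.right_mem_Icc.2 hmem.1) hmem.1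
    have h2 := hm _ hmem.2
    rcases lt_abs.1 h2 with h | h
    · exact h
    · linarith
  · left
    push Not at hex
    refine monotoneOn_of_deriv_nonneg (convex_Ici _) hfc.continuousOn hfd.differentiableOn ?_
    intro t ht
    rw [interior_Ici] at ht
    rw [(hf t).deriv]
    exact (ivt t (le_of_lt ht) fun s hs1 _ => hex s hs1).le

lemma aux_mono {f f' : ℝ → ℝ} (hf : ∀ x, HasDerivAt f (f' x) x) (hf' : Continuous f') {m : ℝ}
    (hm : ∀ z, f' z = 0 → m < |f z|) (ht : Filter.Tendsto f Filter.atTop Filter.atTop)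
    (hb : Filter.Tendsto f Filter.atBot Filter.atBot) (x : ℝ) (hx : -m < f x) :
    ∃ x', m ≤ f x' ∧ ∀ t ∈ Set.uIcc x x', f x ≤ f t := by
  by_cases hxm : m ≤ f x
  · exact ⟨x, hxm, fun t ht => by simp at ht; rw [ht]⟩
  push Not at hxm
  have hne : f' x ≠ 0 := fun h => by
    have := hm x h
    exact absurd (abs_lt.2 ⟨hx, hxm⟩) (not_lt.2 this.le)
  rcases lt_or_gt_of_ne hne with hneg | hpos
  · have hg : ∀ t, HasDerivAt (fun t => f (-t)) (-f' (-t)) t := by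
      intro t
      simpa [Function.comp_def] using (hf (-t)).comp t (hasDerivAt_neg t)
    have hgb : Filter.Tendsto (fun t => f (-t)) Filter.atTop Filter.atBot :=
      hb.comp Filter.tendsto_neg_atTop_atBot
    rcases aux_mono1 hg (by fun_prop) (m := m) (fun z hz => hm _ (by linarith)) (x := -x)
      (by simpa using hx) (by simpa using hneg) with h | ⟨z, hz, hmon, hmz⟩
    · exfalso
      obtain ⟨t, ht1, ht2⟩ := ((hgb.eventually_lt_atBot (f x)).and
        (Filter.eventually_ge_atTop (-x))).exists
      have := h (show -x ∈ Set.Ici (-x) from Set.self_mem_Ici) (show t ∈ Set.Ici (-x) from ht2) ht2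
      simp at this
      linarith
    · refine ⟨-z, hmz.le, fun t ht => ?_⟩
      rw [Set.uIcc_of_ge (by linarith)] at ht
      have := hmon (Set.left_mem_Icc.2 hz) (show -t ∈ _ from ⟨by linarith [ht.2], by linarith [ht.1]⟩)
        (by linarith [ht.2])
      simpa using this
  · rcases aux_mono1 hf hf' hm hx hpos with h | ⟨z, hz, hmon, hmz⟩
    · obtain ⟨t, ht1, ht2⟩ := ((ht.eventually_ge_atTop m).and
        (Filter.eventually_ge_atTop x)).exists
      refine ⟨t, ht1, fun s hs => ?_⟩
      rw [Set.uIcc_of_le ht2] at hs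
      exact h (show x ∈ Set.Ici x from Set.self_mem_Ici) (show s ∈ Set.Ici x from hs.1) hs.1
    · refine ⟨z, hmz.le, fun t ht => ?_⟩
      rw [Set.uIcc_of_le hz] at ht
      exact hmon (Set.left_mem_Icc.2 hz) ht ht.1

lemma H_eval_succ (n : ℕ) (x : ℝ) : (H (n + 2)).eval x =
    2 * x * (H (n + 1)).eval x - 2 * (n + 1) * (H n).eval x := by
  simp [H]

lemma H_deriv (n : ℕ) : Polynomial.derivative (H (n + 1)) =
    Polynomial.C (2 * (n + 1) : ℝ) * H n := by
  induction n using Nat.twoStepInduction with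
  | zero => simp [H]
  | one => simp [H]; ring
  | more n ih1 ih2 =>
    rw [show n + 2 + 1 = (n + 1) + 2 from rfl, H]
    simp only [Polynomial.derivative_sub, Polynomial.derivative_mul, Polynomial.derivative_C,
      Polynomial.derivative_X, ih1, ih2]
    rw [show H (n + 2) = Polynomial.C 2 * Polynomial.X * H (n + 1)
      - Polynomial.C (2 * (n + 1) : ℝ) * H n from by rw [H]]
    push_cast
    have h2 : (Polynomial.C 2 : Polynomial ℝ) = 2 := rfl
    simp only [map_mul, map_add, map_one, h2]
    ring

lemma H_odd (n : ℕ) (x : ℝ) : (H n).eval (-x) = (-1) ^ n * (H n).eval x := by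
  induction n using Nat.twoStepInduction with
  | zero => simp [H]
  | one => simp [H]
  | more n ih1 ih2 =>
    rw [H_eval_succ, H_eval_succ, ih1, ih2]; ring

lemma H_common (n : ℕ) (x : ℝ) : ¬ ((H (n + 1)).eval x = 0 ∧ (H n).eval x = 0) := by
  induction n with
  | zero => simp [H]
  | succ n ih =>
    rintro ⟨h1, h2⟩
    rw [H_eval_succ, h2] at h1
    refine ih ⟨h2, ?_⟩
    have : (2 * (n + 1) : ℝ) ≠ 0 := by positivity
    have h3 : (2 * (n + 1) : ℝ) * (H n).eval x = 0 := by linarith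
    exact (mul_eq_zero.1 h3).resolve_left this

lemma H_growth (n : ℕ) : ∀ᶠ x in Filter.atTop, 1 ≤ (H n).eval x ∧
    x * (H n).eval x ≤ (H (n + 1)).eval x := by
  induction n with
  | zero =>
    filter_upwards [Filter.eventually_ge_atTop 0] with x hx
    simp [H]; linarith
  | succ n ih =>
    filter_upwards [ih, Filter.eventually_ge_atTop (2 * (n + 1) : ℝ)] with x ⟨h1, h2⟩ hx
    have hx1 : 1 ≤ x := by
      have : (0 : ℝ) ≤ n := by positivity
      linarith
    refine ⟨by nlinarith, ?_⟩
    rw [H_eval_succ]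
    have h3 : 2 * (n + 1) * (H n).eval x ≤ x * (H n).eval x := by gcongr
    have h4 : (H (n + 1)).eval x ≤ x * (H (n + 1)).eval x := by
      have : 0 ≤ (H (n + 1)).eval x := le_trans (by positivity) h2
      nlinarith
    linarith

open Real Set in
/-- **Theorem 1.2.** For `n` odd there exists `θ_c > 0` such that for all
`0 < θ < θ_c` the nodal set `N(Φ^θ_n)` is a nonempty connected regular curve
(the gradient of `Φ^θ_n` vanishes nowhere on it), and `Φ^θ_n` has exactly two
nodal domains in `ℝ²`. -/
theorem two_nodal_domains_near_zero (n : ℕ) (hodd : Odd n) (hpos : 0 < n) :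
    ∃ θc : ℝ, 0 < θc ∧ ∀ θ : ℝ, 0 < θ → θ < θc →
      (nodalSet n θ).Nonempty ∧
      IsConnected (nodalSet n θ) ∧
      (∀ p ∈ nodalSet n θ, fderiv ℝ (Phi n θ) p ≠ 0) ∧
      numNodalDomains n θ = 2 := by
  obtain ⟨j, hj⟩ : ∃ j, n = j + 1 := ⟨n - 1, by omega⟩
  set f : ℝ → ℝ := fun x => (H n).eval x with hfdef
  set f' : ℝ → ℝ := fun x => (H n).derivative.eval x with hf'def
  have hf : ∀ x, HasDerivAt f (f' x) x := fun x => (H n).hasDerivAt x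
  have hfc : Continuous f := (H n).continuous
  have hf'c : Continuous f' := (H n).derivative.continuous
  have hfd : Differentiable ℝ f := fun x => (hf x).differentiableAt
  have hf'eq : ∀ x, f' x = 2 * (j + 1) * (H j).eval x := by
    intro x
    simp only [hf'def, hj, H_deriv]
    simp
  have hfodd : ∀ x, f (-x) = - f x := by
    intro x
    simp only [hfdef, H_odd, hodd.neg_one_pow]; ring
  have hsimple : ∀ x, f' x = 0 → f x ≠ 0 := by
    intro x h1 h2
    rw [hf'eq] at h1
    have : (2 * (j + 1) : ℝ) ≠ 0 := by positivity
    refine H_common j x ⟨?_, (mul_eq_zero.1 h1).resolve_left this⟩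
    rw [← hj]; exact h2
  obtain ⟨Y, hY0, hY⟩ : ∃ Y : ℝ, 1 ≤ Y ∧ ∀ y, Y ≤ y → 1 ≤ (H j).eval y ∧ y * (H j).eval y ≤ f y := by
    obtain ⟨Y, hY⟩ := Filter.eventually_atTop.1 (H_growth j)
    refine ⟨max 1 Y, le_max_left _ _, fun y hy => ?_⟩
    have := hY y ((le_max_right _ _).trans hy)
    rw [← hj] at this
    exact this
  have hgrow : ∀ y, Y ≤ y → y ≤ f y := fun y hy => by
    have := hY y hy
    nlinarith
  have hfpos : ∀ y, Y ≤ y → 0 < f y := fun y hy => by linarith [hgrow y hy]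
  have hf'pos : ∀ y, Y ≤ y → 0 < f' y := fun y hy => by
    have := (hY y hy).1
    rw [hf'eq]; positivity
  have hf'even : ∀ y, f' (-y) = f' y := by
    intro y
    have he : Even j := by
      rw [hj] at hodd
      exact Nat.not_odd_iff_even.1 fun h => (Nat.not_even_iff_odd.2 hodd) h.add_one
    rw [hf'eq, hf'eq, H_odd, he.neg_one_pow, one_mul]
  have ht : Filter.Tendsto f Filter.atTop Filter.atTop := by
    refine Filter.tendsto_atTop_mono' _ ?_ Filter.tendsto_id
    filter_upwards [Filter.eventually_ge_atTop Y] with y hy using hgrow y hy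
  have hb : Filter.Tendsto f Filter.atBot Filter.atBot := by
    have : f = fun x => - f (-x) := by funext x; rw [hfodd]; ring
    rw [this]
    exact Filter.tendsto_neg_atTop_atBot.comp (ht.comp Filter.tendsto_neg_atBot_atTop)
  have hmt : MonotoneOn f (Set.Ici Y) := by
    refine monotoneOn_of_deriv_nonneg (convex_Ici _) hfc.continuousOn hfd.differentiableOn ?_
    intro t ht
    rw [interior_Ici] at ht
    rw [(hf t).deriv]
    exact (hf'pos t (le_of_lt ht)).le
  have hmb : MonotoneOn f (Set.Iic (-Y)) := by
    intro a ha b hb hab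
    have ha' : a ≤ -Y := ha
    have hb' : b ≤ -Y := hb
    have := hmt (show -b ∈ Set.Ici Y from Set.mem_Ici.2 (by linarith))
      (show -a ∈ Set.Ici Y from Set.mem_Ici.2 (by linarith)) (by linarith)
    rw [hfodd, hfodd] at this
    linarith
  obtain ⟨m, hm0, hm⟩ : ∃ m : ℝ, 0 < m ∧ ∀ z, f' z = 0 → m < |f z| := by
    have hne : (H n).derivative ≠ 0 := by
      intro h
      have := hf'pos Y le_rfl
      simp [hf'def, h] at this
    have hev : ∀ᶠ m : ℝ in nhdsWithin 0 (Set.Ioi 0),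
        ∀ z ∈ (H n).derivative.roots.toFinset, m < |f z| := by
      rw [Filter.eventually_all_finset]
      intro z hz
      have hz' : f' z = 0 := by simpa [hne] using hz
      exact nhdsWithin_le_nhds (eventually_lt_nhds (abs_pos.2 (hsimple z hz')))
    obtain ⟨m, h1, h2⟩ := (hev.and self_mem_nhdsWithin).exists
    refine ⟨m, h2, fun z hz => h1 z ?_⟩
    simp only [Multiset.mem_toFinset, Polynomial.mem_roots hne]
    exact hz
  obtain ⟨M, hM⟩ := (isCompact_Icc (a := -Y) (b := Y)).exists_bound_of_continuousOn hfc.continuousOn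
  have hM0 : 0 ≤ M := (norm_nonneg _).trans (hM Y ⟨by linarith, le_rfl⟩)
  have hmono := aux_mono hf hf'c hm ht hb
  refine ⟨arctan (m / (M + 1)), arctan_pos.2 (by positivity), fun θ hθ0 hθ => ?_⟩
  have hθ2 : θ < π / 2 := hθ.trans (arctan_lt_pi_div_two _)
  have hcos : 0 < cos θ := cos_pos_of_mem_Ioo ⟨by linarith [pi_pos], hθ2⟩
  have hk : 0 < tan θ := tan_pos_of_pos_of_lt_pi_div_two hθ0 hθ2
  have hkm : tan θ < m / (M + 1) := by
    have := tan_lt_tan_of_nonneg_of_lt_pi_div_two hθ0.le (arctan_lt_pi_div_two _) hθ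
    rwa [tan_arctan] at this
  have hsin : sin θ = cos θ * tan θ := by rw [mul_comm, tan_mul_cos hcos.ne']
  set k := tan θ with hkdef
  have hkM : ∀ y, -Y ≤ y → y ≤ Y → |k * f y| < m := by
    intro y h1 h2
    have := hM y ⟨h1, h2⟩
    rw [Real.norm_eq_abs] at this
    rw [abs_mul, abs_of_pos hk]
    rw [lt_div_iff₀ (by positivity)] at hkm
    nlinarith
  have hPhi : ∀ p : ℝ × ℝ, Phi n θ p = (f p.1 + k * f p.2) *
      (cos θ * exp (-(p.1 ^ 2 + p.2 ^ 2) / 2)) := by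
    intro p
    simp only [Phi, hsin, hfdef]; ring
  have hE : ∀ p : ℝ × ℝ, 0 < cos θ * exp (-(p.1 ^ 2 + p.2 ^ 2) / 2) := fun p => by positivity
  have hPhieq : Phi n θ = fun p : ℝ × ℝ => (f p.1 + k * f p.2) *
      (cos θ * exp (-(p.1 ^ 2 + p.2 ^ 2) / 2)) := funext hPhi
  have hdiff : Differentiable ℝ (Phi n θ) := by
    rw [hPhieq]; fun_prop
  have hcont : Continuous (Phi n θ) := hdiff.continuous
  have hpc : IsPathConnected {p : ℝ × ℝ | 0 < Phi n θ p} := by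
    have := aux_pos hfc hk (by linarith) hfpos hmt hmb ht hkM hmono
    convert this using 3 with p
    rw [hPhi, mul_pos_iff_of_pos_right (hE p)]
  have hPneg : ∀ p, Phi n θ (-p) = - Phi n θ p := by
    intro p
    simp only [hPhi, Prod.fst_neg, Prod.snd_neg, hfodd]; ring
  have hnc : IsPathConnected {p : ℝ × ℝ | Phi n θ p < 0} := by
    have := hpc.image (f := fun p => -p) (by fun_prop)
    convert this using 1
    ext p
    constructor
    · intro h
      refine ⟨-p, ?_, neg_neg p⟩
      have h' : Phi n θ p < 0 := h
      show 0 < Phi n θ (-p)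
      rw [hPneg]; linarith
    · rintro ⟨q, hq, rfl⟩
      have h' : 0 < Phi n θ q := hq
      show Phi n θ (-q) < 0
      rw [hPneg]; linarith
  have hreg : ∀ p ∈ nodalSet n θ, fderiv ℝ (Phi n θ) p ≠ 0 := by
    intro p hp hfd0
    have hp0 : Phi n θ p = 0 := hp
    have hF0 : f p.1 + k * f p.2 = 0 := by
      rw [hPhi] at hp0
      exact (mul_eq_zero.1 hp0).resolve_right (hE p).ne'
    have hFD : HasFDerivAt (Phi n θ) (0 : ℝ × ℝ →L[ℝ] ℝ) p := hfd0 ▸ (hdiff p).hasFDerivAt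
    -- in each direction
    have d1 : f' p.1 = 0 := by
      have h1 : HasDerivAt (fun t : ℝ => Phi n θ (t, p.2)) 0 p.1 := by
        have hl : HasDerivAt (fun t : ℝ => (t, p.2)) ((1 : ℝ), (0 : ℝ)) p.1 :=
          (hasDerivAt_id p.1).prodMk (hasDerivAt_const _ _)
        simpa [Function.comp_def] using HasFDerivAt.comp_hasDerivAt p.1 (l := Phi n θ) hFD hl
      have h2 : HasDerivAt (fun t : ℝ => cos θ * exp (-(t ^ 2 + p.2 ^ 2) / 2))
          (deriv (fun t : ℝ => cos θ * exp (-(t ^ 2 + p.2 ^ 2) / 2)) p.1) p.1 :=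
        DifferentiableAt.hasDerivAt (by fun_prop)
      have h3 := ((hf p.1).add_const (k * f p.2)).mul h2
      have h4 := h1.unique (h3.congr_of_eventuallyEq (Filter.Eventually.of_forall fun t => by
        simp [hPhi]))
      rw [hF0, zero_mul, add_zero] at h4
      exact (mul_eq_zero.1 h4.symm).resolve_right (hE p).ne'
    have d2 : f' p.2 = 0 := by
      have h1 : HasDerivAt (fun t : ℝ => Phi n θ (p.1, t)) 0 p.2 := by
        have hl : HasDerivAt (fun t : ℝ => (p.1, t)) ((0 : ℝ), (1 : ℝ)) p.2 :=
          (hasDerivAt_const _ _).prodMk (hasDerivAt_id p.2)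
        simpa [Function.comp_def] using HasFDerivAt.comp_hasDerivAt p.2 (l := Phi n θ) hFD hl
      have h2 : HasDerivAt (fun t : ℝ => cos θ * exp (-(p.1 ^ 2 + t ^ 2) / 2))
          (deriv (fun t : ℝ => cos θ * exp (-(p.1 ^ 2 + t ^ 2) / 2)) p.2) p.2 :=
        DifferentiableAt.hasDerivAt (by fun_prop)
      have h3 := (((hf p.2).const_mul k).const_add (f p.1)).mul h2
      have h4 := h1.unique (h3.congr_of_eventuallyEq (Filter.Eventually.of_forall fun t => by
        simp [hPhi]))
      rw [hF0, zero_mul, add_zero] at h4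
      have h5 := (mul_eq_zero.1 h4.symm).resolve_right (hE p).ne'
      exact (mul_eq_zero.1 h5).resolve_left hk.ne'
    have hy1 : p.2 ≤ Y := by
      by_contra h
      exact (hf'pos p.2 (not_le.1 h).le).ne' d2
    have hy2 : -Y ≤ p.2 := by
      by_contra h
      have := hf'pos (-p.2) (by linarith [not_le.1 h])
      rw [hf'even] at this
      exact this.ne' d2
    have e1 := hkM p.2 hy2 hy1
    have e2 := hm p.1 d1
    rw [show f p.1 = -(k * f p.2) by linarith, abs_neg] at e2
    linarith
  have hclP : ∀ p, Phi n θ p = 0 → p ∈ closure {p : ℝ × ℝ | 0 < Phi n θ p} := by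
    intro p hp
    by_contra hcl
    refine hreg p hp (IsLocalMax.fderiv_eq_zero ?_)
    rw [mem_closure_iff_frequently, Filter.not_frequently] at hcl
    filter_upwards [hcl] with q hq
    rw [hp]; exact not_lt.1 hq
  have hclN : ∀ p, Phi n θ p = 0 → p ∈ closure {p : ℝ × ℝ | Phi n θ p < 0} := by
    intro p hp
    by_contra hcl
    refine hreg p hp (IsLocalMin.fderiv_eq_zero ?_)
    rw [mem_closure_iff_frequently, Filter.not_frequently] at hcl
    filter_upwards [hcl] with q hq
    rw [hp]; exact not_lt.1 hq
  have hP : IsPreconnected {p : ℝ × ℝ | 0 ≤ Phi n θ p} := by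
    refine hpc.isConnected.isPreconnected.subset_closure (fun p hp => Set.mem_setOf.2 (le_of_lt (Set.mem_setOf.1 hp))) fun p hp => ?_
    rcases (show 0 ≤ Phi n θ p from hp).eq_or_lt with h | h
    · exact hclP p h.symm
    · exact subset_closure h
  have hN : IsPreconnected {p : ℝ × ℝ | Phi n θ p ≤ 0} := by
    refine hnc.isConnected.isPreconnected.subset_closure (fun p hp => Set.mem_setOf.2 (le_of_lt (Set.mem_setOf.1 hp))) fun p hp => ?_
    rcases (show Phi n θ p ≤ 0 from hp).eq_or_lt with h | h
    · exact hclN p h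
    · exact subset_closure h
  have hne : (nodalSet n θ).Nonempty := by
    refine ⟨0, ?_⟩
    have := hPneg 0
    rw [neg_zero] at this
    show Phi n θ 0 = 0
    linarith
  refine ⟨hne, ⟨hne, aux_unicoh hcont hP hN⟩, hreg, ?_⟩
  have hcompP : ∀ p, 0 < Phi n θ p →
      connectedComponentIn {q : ℝ × ℝ | Phi n θ q ≠ 0} p = {q | 0 < Phi n θ q} := by
    intro p hp
    have hmem : p ∈ {q : ℝ × ℝ | Phi n θ q ≠ 0} := hp.ne'
    apply Set.Subset.antisymm
    · intro q hq
      by_contra hq'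
      obtain ⟨c, hc, hc0⟩ := isPreconnected_connectedComponentIn.intermediate_value hq
        (mem_connectedComponentIn hmem) hcont.continuousOn ⟨not_lt.1 hq', hp.le⟩
      exact connectedComponentIn_subset _ _ hc hc0
    · exact hpc.isConnected.isPreconnected.subset_connectedComponentIn hp
        (fun q hq => ne_of_gt hq)
  have hcompN : ∀ p, Phi n θ p < 0 →
      connectedComponentIn {q : ℝ × ℝ | Phi n θ q ≠ 0} p = {q | Phi n θ q < 0} := by
    intro p hp
    have hmem : p ∈ {q : ℝ × ℝ | Phi n θ q ≠ 0} := hp.ne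
    apply Set.Subset.antisymm
    · intro q hq
      by_contra hq'
      obtain ⟨c, hc, hc0⟩ := isPreconnected_connectedComponentIn.intermediate_value
        (mem_connectedComponentIn hmem) hq hcont.continuousOn ⟨hp.le, not_lt.1 hq'⟩
      exact connectedComponentIn_subset _ _ hc hc0
    · exact hnc.isConnected.isPreconnected.subset_connectedComponentIn hp
        (fun q hq => ne_of_lt hq)
  obtain ⟨a, ha⟩ := hpc.nonempty
  obtain ⟨b, hb⟩ := hnc.nonempty
  have hset : {C : Set (ℝ × ℝ) | ∃ p, Phi n θ p ≠ 0 ∧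
      C = connectedComponentIn {q : ℝ × ℝ | Phi n θ q ≠ 0} p} =
      {{q | 0 < Phi n θ q}, {q | Phi n θ q < 0}} := by
    ext C
    constructor
    · rintro ⟨p, hp, rfl⟩
      rcases lt_or_gt_of_ne hp with h | h
      · right; exact hcompN p h
      · left; exact hcompP p h
    · rintro (rfl | rfl)
      · exact ⟨a, ne_of_gt ha, (hcompP a ha).symm⟩
      · exact ⟨b, ne_of_lt hb, (hcompN b hb).symm⟩
  rw [numNodalDomains, hset, Set.ncard_pair]
  intro h
  have : a ∈ {q : ℝ × ℝ | Phi n θ q < 0} := h ▸ ha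
  exact lt_asymm (show 0 < Phi n θ a from ha) this
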